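/- Let f, g ∈ ℂ[x_0,…,x_5] be homogeneous of degrees n and k respectively, with n ≥ k ≥ 2 and n ≥ 5, such that the hypersurface {g = 0} ⊂ ℙ⁵ is smooth. Let X = {f = g = 0} ⊂ ℙ⁵(ℂ) and suppose that Sing(X) is finite with 5·|Sing(X)| ≤ (n+k−2)(n−1). Then the singular points of X impose independent linear conditions on homogeneous polynomials of degree 2n+k−6: for every point P ∈ Sing(X) there exists a homogeneous polynomial of degree 2n+k−6 in ℂ[x_0,…,x_5] vanishing at every point of Sing(X) \ {P} and not vanishing at P. -/

import Mathlib

open MvPolynomial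

noncomputable section

/-- The projective space `ℙ^N(ℂ)`. -/
abbrev ProjPt (N : ℕ) := Projectivization ℂ (Fin (N + 1) → ℂ)

/-- A (homogeneous) polynomial vanishes at a point of projective space. -/
def VanishesAt {N : ℕ} (F : MvPolynomial (Fin (N + 1)) ℂ) (p : ProjPt N) : Prop :=
  eval p.rep F = 0

/-- The `2 × 6` Jacobian matrix of `f, g` evaluated at `v`. -/
def Jac6 (f g : MvPolynomial (Fin 6) ℂ) (v : Fin 6 → ℂ) : Matrix (Fin 2) (Fin 6) ℂ :=
  Matrix.of ![fun j : Fin 6 => eval v (pderiv j f), fun j : Fin 6 => eval v (pderiv j g)]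

/-- The singular locus of `X = {f = g = 0} ⊂ ℙ⁵(ℂ)`: points of `X` where the Jacobian
matrix has rank at most `1`. -/
def SingCI6 (f g : MvPolynomial (Fin 6) ℂ) : Set (ProjPt 5) :=
  {p : ProjPt 5 | eval p.rep f = 0 ∧ eval p.rep g = 0 ∧ (Jac6 f g p.rep).rank ≤ 1}

/-!
Being cut out by forms of degree at most `a = n + k - 2` (the equations `f`, `g` and the Jacobian
minors) forces a finite set `Γ` of points to impose independent conditions in degree `D`, as soon as
`Γ` has fewer than `(a - 1) * (b / 2 + 1)` points for some `b ≥ 1` with `a + b ≤ D + 3`; here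
`b = n - 1`.

Suppose a point of `Γ` cannot be separated by forms of degree `D`. Then some functional on the
functions on `Γ` annihilates the forms of degree `D`; let `T > D` be the first degree where it is
nonzero on forms. By Macaulay duality it defines a graded Gorenstein algebra of socle degree `T`,
a quotient of `K[x]` by an ideal containing every form vanishing on `Γ` and also the linear form `L`
that was used to normalise the points. In degrees `1, …, T` its Hilbert function is bounded by the
differences of that of `Γ`, so its values there have sum at most `|Γ|`.

Let `V` be the space of linear forms of this algebra. As the sum is small, `dim V ^ (r + 1) ≤ r + 1`
for some `r`, and then `x V ^ r = V ^ (r + 1)` for some `x ∈ V`. The maps `u ↦ y u / x` with `y ∈ V`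
are commuting endomorphisms of `V ^ r`, and a common eigenvector gives a system of eigenvalues `l`,
that is, a point at which every form of degree at most `a` that vanishes on `Γ` vanishes, and `L`
as well. Since `Γ` is cut out by such forms, `l ∈ Γ`; but `L` has no zero on `Γ`.
-/

open Filter Module
open scoped Pointwise LinearAlgebra.Projectivization

section LinearAlgebra

variable {K E M W ι : Type*} [Field K] [AddCommGroup E] [Module K E] [AddCommGroup M] [Module K M]
  [AddCommGroup W] [Module K W]

theorem eventually_linearIndependent_add_smul [Finite ι] {v : ι → E}
    (hv : LinearIndependent K v) (w : ι → E) :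
    ∀ᶠ s : K in cofinite, LinearIndependent K (v + s • w) := by
  obtain ⟨g, hg⟩ := (Finsupp.linearCombination K v).exists_leftInverse_of_injective
    (LinearMap.ker_eq_bot.2 hv)
  let N : End K (ι →₀ K) := g ∘ₗ Finsupp.linearCombination K w
  have hfin : {s : K | N.HasEigenvalue (-s⁻¹)}.Finite :=
    N.finite_hasEigenvalue.preimage (neg_injective.comp inv_injective).injOn
  filter_upwards [hfin.compl_mem_cofinite, eventually_cofinite_ne (0 : K)] with s hs hs0
  rw [linearIndependent_iff]
  intro c hc
  have hgv : g (Finsupp.linearCombination K v c) = c := LinearMap.congr_fun hg c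
  have hsum : Finsupp.linearCombination K v c + s • Finsupp.linearCombination K w c = 0 := by
    rw [← hc]
    simp [Finsupp.linearCombination_apply, Finsupp.sum, Finset.sum_add_distrib, Finset.smul_sum,
      smul_comm s]
  have hN : c + s • N c = 0 := by simpa [N, hgv] using congrArg g hsum
  by_contra hc0
  refine hs (End.hasEigenvalue_of_hasEigenvector (x := c) ⟨?_, hc0⟩)
  rw [End.mem_eigenspace_iff, neg_smul, eq_neg_iff_add_eq_zero, ← smul_right_inj hs0, smul_add,
    smul_inv_smul₀ hs0, smul_zero, add_comm, hN]

theorem mem_range_of_eventually_mem_range_add_smul [Infinite K] [FiniteDimensional K M]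
    (f g : M →ₗ[K] E) {z : E}
    (hf : ∀ s : K, finrank K (LinearMap.range (f + s • g)) ≤ finrank K (LinearMap.range f))
    (hz : ∀ᶠ s : K in cofinite, z ∈ LinearMap.range (f + s • g)) : z ∈ LinearMap.range f := by
  by_contra hzf
  let b := finBasis K (LinearMap.range f)
  choose u hu using fun i => (b i).2
  let v : Fin (finrank K (LinearMap.range f) + 1) → E := Fin.cons z fun i => f (u i)
  let w : Fin (finrank K (LinearMap.range f) + 1) → E := Fin.cons 0 fun i => g (u i)
  have hind : LinearIndependent K v := by
    simp only [v, hu]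
    refine linearIndependent_finCons.2
      ⟨b.linearIndependent.map' (Submodule.subtype _) (Submodule.ker_subtype _), fun hmem => hzf ?_⟩
    refine Submodule.span_le.2 ?_ hmem
    rintro _ ⟨i, rfl⟩
    exact (b i).2
  obtain ⟨s, hs, hzs⟩ :=
    ((eventually_linearIndependent_add_smul hind w).and hz).exists
  have hmem (i) : (v + s • w) i ∈ LinearMap.range (f + s • g) := by
    cases i using Fin.cases with
    | zero => simpa [v, w] using hzs
    | succ i => exact ⟨u i, by simp [v, w]⟩
  have hs' : LinearIndependent K fun i => (⟨_, hmem i⟩ : LinearMap.range (f + s • g)) :=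
    LinearIndependent.of_comp (Submodule.subtype _) hs
  have hcard := hs'.fintype_card_le_finrank
  rw [Fintype.card_fin] at hcard
  exact absurd (hf s) (by omega)

theorem coeff_mem_of_forall_sum_smul_mem [Infinite K] (S : Submodule K E) {N : ℕ} {b : ℕ → E}
    (h : ∀ s : K, ∑ i ∈ Finset.range N, s ^ i • b i ∈ S) {i : ℕ} (hi : i < N) : b i ∈ S := by
  by_contra hb
  obtain ⟨ψ, hψ, hS⟩ := Submodule.exists_le_ker_of_notMem hb
  have hzero : ∑ j ∈ Finset.range N, Polynomial.monomial j (ψ (b j)) = 0 := by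
    refine Polynomial.funext fun s => ?_
    simpa [Polynomial.eval_finsetSum, mul_comm] using hS (h s)
  have hcoeff := congrArg (Polynomial.coeff · i) hzero
  simp [Polynomial.coeff_monomial, hi, hψ] at hcoeff

theorem exists_common_eigenvector [IsAlgClosed K] [FiniteDimensional K W] [Nontrivial W]
    (f : ι → End K W) (hf : ∀ i j, Commute (f i) (f j)) :
    ∃ w : W, w ≠ 0 ∧ ∃ l : ι → K, ∀ i, f i w = l i • w := by
  let R := Algebra.adjoin K (Set.range f)
  have : IsMulCommutative R := Algebra.isMulCommutative_adjoin K (by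
    rintro _ ⟨i, rfl⟩ _ ⟨j, rfl⟩
    exact hf i j)
  have : IsArtinian R W := isArtinian_of_tower K inferInstance
  obtain ⟨S, hS, -⟩ := (eq_bot_or_exists_atom_le (⊤ : Submodule R W)).resolve_left top_ne_bot
  have : IsSimpleModule R S := isSimpleModule_iff_isAtom.2 hS
  have : FiniteDimensional K S := inferInstanceAs (FiniteDimensional K (S.restrictScalars K))
  have : Nontrivial S := IsSimpleModule.nontrivial R S
  obtain ⟨w, hw⟩ := exists_ne (0 : S)
  let mulBy (i : ι) : End R S :=
    { toFun := fun v => (⟨f i, Algebra.subset_adjoin ⟨i, rfl⟩⟩ : R) • v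
      map_add' := smul_add _
      map_smul' := fun a v => by simp only [RingHom.id_apply, smul_smul, mul_comm' a] }
  choose l hl using fun i =>
    (IsSimpleModule.algebraMap_end_bijective_of_isAlgClosed (A := R) (V := S) K).2 (mulBy i)
  refine ⟨w, by simpa using hw, l, fun i => ?_⟩
  exact congrArg Subtype.val (LinearMap.congr_fun (hl i) w).symm

theorem finrank_range_add_finrank_le {P Q : Type*} [AddCommGroup P] [Module K P] [AddCommGroup Q]
    [Module K Q] [FiniteDimensional K P] (f : M →ₗ[K] P) (g : M →ₗ[K] Q) (E : Submodule K P)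
    (hE : E ≤ LinearMap.range f) (hg : ∀ m, f m ∈ E → g m = 0) :
    finrank K (LinearMap.range g) + finrank K E ≤ finrank K (LinearMap.range f) := by
  obtain ⟨r, hr⟩ := f.rangeRestrict.exists_rightInverse_of_surjective f.range_rangeRestrict
  let h : LinearMap.range f →ₗ[K] Q := g ∘ₗ r
  have hfr (y : LinearMap.range f) : f (r y) = y :=
    congrArg Subtype.val (LinearMap.congr_fun hr y)
  have hgh : LinearMap.range g ≤ LinearMap.range h := by
    rintro _ ⟨m, rfl⟩
    refine ⟨f.rangeRestrict m, eq_of_sub_eq_zero ?_⟩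
    rw [LinearMap.comp_apply, ← map_sub]
    exact hg _ (by simp [hfr])
  have hEker : E.comap (LinearMap.range f).subtype ≤ LinearMap.ker h := fun y hy =>
    hg _ (by rwa [hfr])
  rw [← h.finrank_range_add_finrank_ker, ← (Submodule.comapSubtypeEquivOfLe hE).finrank_eq]
  exact add_le_add (Submodule.finrank_mono hgh) (Submodule.finrank_mono hEker)

end LinearAlgebra

section PowersOfSubspace

variable {K A : Type*} [Field K] [CommRing A] [Algebra K A] {V : Submodule K A}

theorem pow_mul_mul_mem_of_forall_pow_succ_mul_mem [CharZero K] {S : Submodule K A} {k : ℕ} {z : A}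
    (h : ∀ y ∈ V, y ^ (k + 1) * z ∈ S) {y w : A} (hy : y ∈ V) (hw : w ∈ V) :
    y ^ k * (z * w) ∈ S := by
  have hcoeff : w ^ 1 * y ^ (k + 1 - 1) * ((k + 1).choose 1 : A) * z ∈ S := by
    refine coeff_mem_of_forall_sum_smul_mem S (N := k + 1 + 1)
      (b := fun i => w ^ i * y ^ (k + 1 - i) * ((k + 1).choose i : A) * z) (fun s => ?_) (by omega)
    have hadd := h (s • w + y) (V.add_mem (V.smul_mem s hw) hy)
    rw [add_pow, Finset.sum_mul] at hadd
    simpa only [smul_pow, smul_mul_assoc] using hadd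
  have hk : ((k + 1 : ℕ) : K) ≠ 0 := by exact_mod_cast k.succ_ne_zero
  rw [← S.smul_mem_iff hk, Algebra.smul_def, map_natCast]
  convert hcoeff using 1
  simp only [Nat.choose_one_right, add_tsub_cancel_right]
  ring

theorem pow_le_of_forall_pow_mem [CharZero K] {S : Submodule K A} {n : ℕ}
    (h : ∀ y ∈ V, y ^ n ∈ S) : V ^ n ≤ S := by
  suffices hpolar : ∀ m k, m + k = n → ∀ z ∈ V ^ m, ∀ y ∈ V, y ^ k * z ∈ S from fun z hz => by
    simpa using hpolar n 0 rfl z hz 0 V.zero_mem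
  intro m
  induction m with
  | zero =>
    rintro k rfl z hz y hy
    obtain ⟨c, rfl⟩ := Submodule.mem_one.1 (pow_zero V ▸ hz)
    rw [mul_comm, ← Algebra.smul_def]
    exact S.smul_mem c (by simpa using h y hy)
  | succ m ih =>
    intro k hk z hz y hy
    rw [pow_succ] at hz
    induction hz using Submodule.mul_induction_on' with
    | mem_mul_mem z hz w hw =>
      exact pow_mul_mul_mem_of_forall_pow_succ_mul_mem (ih (k + 1) (by omega) z hz) hy hw
    | add z _ z' _ ihz ihz' =>
      rw [mul_add]
      exact S.add_mem ihz ihz'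

theorem finite_pow (hV : V.FG) (t : ℕ) : Module.Finite K (V ^ t : Submodule K A) :=
  Module.Finite.iff_fg.2 (hV.pow t)

theorem mul_mem_pow_succ {x u : A} {t : ℕ} (hx : x ∈ V) (hu : u ∈ V ^ t) :
    x * u ∈ V ^ (t + 1) :=
  pow_succ' V t ▸ Submodule.mul_mem_mul hx hu

theorem pow_mul_pow_mem_pow {x y : A} (hx : x ∈ V) (hy : y ∈ V) (i j : ℕ) :
    x ^ i * y ^ j ∈ V ^ (i + j) :=
  pow_add V i j ▸ Submodule.mul_mem_mul (V.pow_mem_pow hx i) (V.pow_mem_pow hy j)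

theorem pow_mul_pow_sub_smul_pow_mem {x y : A} (hx : x ∈ V) (hy : y ∈ V) (s : K) {i j t : ℕ}
    (hij : i + j = t + 1) : x ^ i * y ^ j - (-s) ^ i • y ^ (t + 1) ∈ (x + s • y) • V ^ t := by
  induction i generalizing j with
  | zero => simp [← hij]
  | succ i ih =>
    have hstep : (x + s • y) * (x ^ i * y ^ j) ∈ (x + s • y) • V ^ t := by
      rw [show t = i + j by omega]
      exact Submodule.smul_mem_pointwise_smul _ _ _ (pow_mul_pow_mem_pow hx hy i j)
    convert Submodule.add_mem _ hstep (Submodule.smul_mem _ (-s) (@ih (j + 1) (by omega))) using 1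
    simp only [Algebra.smul_def, map_neg, map_pow]
    ring

theorem eventually_pow_succ_mem_add_smul_smul_pow (hV : V.FG) {t : ℕ}
    (ht : finrank K (V ^ (t + 1) : Submodule K A) ≤ t + 1) {x y : A} (hx : x ∈ V) (hy : y ∈ V) :
    ∀ᶠ s : K in cofinite, y ^ (t + 1) ∈ (x + s • y) • V ^ t := by
  have := finite_pow hV (t + 1)
  let mono (i : Fin (t + 2)) : (V ^ (t + 1) : Submodule K A) :=
    ⟨x ^ (i : ℕ) * y ^ (t + 1 - i), by
      simpa [show (i : ℕ) + (t + 1 - i) = t + 1 by omega] using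
        pow_mul_pow_mem_pow hx hy (i : ℕ) (t + 1 - i)⟩
  have hdep : ¬ LinearIndependent K mono := fun hind => by
    have := hind.fintype_card_le_finrank
    rw [Fintype.card_fin] at this
    omega
  obtain ⟨c, hc, i₀, hi₀⟩ := Fintype.not_linearIndependent_iff.1 hdep
  have hrel : ∑ i, c i • (x ^ (i : ℕ) * y ^ (t + 1 - i)) = 0 := by
    simpa [mono] using congrArg Subtype.val hc
  let p : Polynomial K := ∑ i : Fin (t + 2), Polynomial.monomial (i : ℕ) (c i)
  have hp : p ≠ 0 := fun h => hi₀ <| by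
    simpa [p, Polynomial.coeff_monomial, Fin.val_inj] using congrArg (Polynomial.coeff · i₀) h
  have hroots : {s : K | p.IsRoot (-s)}.Finite :=
    (Polynomial.finite_setOfPred_isRoot hp).preimage neg_injective.injOn
  filter_upwards [hroots.compl_mem_cofinite] with s hs
  have hdiff := Submodule.sum_mem _ fun i (_ : i ∈ Finset.univ) =>
    Submodule.smul_mem _ (c i) (pow_mul_pow_sub_smul_pow_mem hx hy s
      (show (i : ℕ) + (t + 1 - i) = t + 1 by omega))
  simp only [smul_sub, Finset.sum_sub_distrib, hrel, zero_sub, smul_smul, ← Finset.sum_smul]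
    at hdiff
  rw [← Submodule.smul_mem_iff _ (show p.eval (-s) ≠ 0 from hs), ← Submodule.neg_mem_iff]
  simpa [p, Polynomial.eval_finsetSum] using hdiff

-- If `x` maximises the rank of `V ^ t → V ^ (t + 1)`, then `y ^ (t + 1) ∈ (x + s • y) • V ^ t` for
-- almost all `s` persists at `s = 0`; powers of elements of `V` span `V ^ (t + 1)`.
theorem exists_smul_pow_eq_pow_succ [CharZero K] (hV : V.FG) {t : ℕ}
    (ht : finrank K (V ^ (t + 1) : Submodule K A) ≤ t + 1) :
    ∃ x ∈ V, x • V ^ t = V ^ (t + 1) := by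
  have := finite_pow hV t
  have := finite_pow hV (t + 1)
  let mulBy : A →ₗ[K] (V ^ t : Submodule K A) →ₗ[K] A :=
    (LinearMap.mul K A).compl₂ (V ^ t : Submodule K A).subtype
  have hrange (x : A) : LinearMap.range (mulBy x) = x • V ^ t :=
    (LinearMap.range_comp _ (LinearMap.mulLeft K x)).trans (by rw [Submodule.range_subtype]; rfl)
  have hle {x : A} (hx : x ∈ V) : LinearMap.range (mulBy x) ≤ V ^ (t + 1) := by
    rintro _ ⟨u, rfl⟩
    exact mul_mem_pow_succ hx u.2
  have hbdd : ((fun x => finrank K (LinearMap.range (mulBy x))) '' V).Finite :=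
    (Set.finite_Iic (finrank K (V ^ (t + 1) : Submodule K A))).subset <| by
      rintro _ ⟨x, hx, rfl⟩
      exact Submodule.finrank_mono (hle hx)
  obtain ⟨x, hx, hmax⟩ := hbdd.exists_maximalFor' _ _ ⟨0, V.zero_mem⟩
  refine ⟨x, hx, le_antisymm (hrange x ▸ hle hx) (pow_le_of_forall_pow_mem fun y hy => ?_)⟩
  rw [← hrange]
  refine mem_range_of_eventually_mem_range_add_smul (mulBy x) (mulBy y) (fun s => ?_) ?_
  · rw [← map_smul, ← map_add]
    exact (le_total _ _).elim id (hmax (V.add_mem hx (V.smul_mem s hy)))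
  · simpa only [← map_smul, ← map_add, hrange] using
      eventually_pow_succ_mem_add_smul_smul_pow hV ht hx hy

theorem smul_pow_eq_pow_succ_of_le {x : A} {s t : ℕ} (h : x • V ^ t = V ^ (t + 1)) (hts : t ≤ s) :
    x • V ^ s = V ^ (s + 1) := by
  obtain ⟨d, rfl⟩ := Nat.exists_eq_add_of_le hts
  rw [pow_add, ← smul_mul_assoc, h, ← pow_add, add_right_comm]

theorem finrank_pow_le_of_smul_pow_eq (hV : V.FG) {x : A} {s t : ℕ}
    (h : x • V ^ t = V ^ (t + 1)) (hts : t ≤ s) :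
    finrank K (V ^ s : Submodule K A) ≤ finrank K (V ^ t : Submodule K A) := by
  induction s, hts using Nat.le_induction with
  | base => exact le_rfl
  | succ s hts ih =>
    have := finite_pow hV s
    rw [← smul_pow_eq_pow_succ_of_le h hts]
    exact (Submodule.finrank_map_le _ _).trans ih

end PowersOfSubspace

section HomogeneousEvaluation

variable {K A ι : Type*} [CommRing K] [CommRing A] [Algebra K A] {F : MvPolynomial ι K} {d : ℕ}

theorem aeval_const_mul (hF : F.IsHomogeneous d) (c : A) (y : ι → A) :
    aeval (fun i => c * y i) F = c ^ d * aeval y F := by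
  simp only [aeval_def, eval₂_eq, Finset.mul_sum]
  refine Finset.sum_congr rfl fun m hm => ?_
  rw [hF.degree_eq_sum_deg_support hm]
  simp only [mul_pow, Finset.prod_mul_distrib, Finset.prod_pow_eq_pow_sum]
  ring

theorem aeval_mul_eq_eval_smul {y : ι → A} {x u : A} {l : ι → K}
    (h : ∀ i, y i * u = l i • (x * u)) (hF : F.IsHomogeneous d) :
    aeval y F * u = eval l F • (x ^ d * u) := by
  -- Modulo the annihilator of `u`, the tuple `y` becomes the multiple `x • l` of a scalar tuple.
  let π := Ideal.Quotient.mkₐ K (Ideal.torsionOf A A u)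
  have hπ {p q : A} : π p = π q ↔ p * u = q * u := by
    rw [Ideal.Quotient.mkₐ_eq_mk, Ideal.Quotient.eq, Ideal.mem_torsionOf_iff, smul_eq_mul,
      sub_mul, sub_eq_zero]
  have hy : (fun i => π (y i)) = fun i => π x * (algebraMap K _ ∘ l) i := by
    funext i
    rw [Function.comp_apply, ← π.commutes, ← map_mul, hπ, h, Algebra.smul_def]
    ring
  rw [← smul_mul_assoc, ← hπ, comp_aeval_apply, hy, aeval_const_mul hF, map_smul, map_pow,
    aeval_algebraMap_apply, Algebra.smul_def, mul_comm]
  rfl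

theorem eval_smul (hF : F.IsHomogeneous d) (c : K) (v : ι → K) :
    eval (c • v) F = c ^ d * eval v F := by
  simpa [aeval_eq_eval, Pi.smul_def] using aeval_const_mul hF c v

end HomogeneousEvaluation

/-- `φ` is a Macaulay dual generator of socle degree `T` for the graded pieces `V ^ i`: the pairing
`(u, v) ↦ φ (u * v)` between `V ^ i` and `V ^ j` is nondegenerate on the left whenever `i + j = T`,
hence, as `i` and `j` play symmetric roles, perfect. -/
def IsMacaulayDual {K A : Type*} [Field K] [CommRing A] [Algebra K A] (φ : A →ₗ[K] K)
    (V : Submodule K A) (T : ℕ) : Prop :=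
  ∀ ⦃i j : ℕ⦄, i + j = T → ∀ u ∈ V ^ i, (∀ v ∈ V ^ j, φ (u * v) = 0) → u = 0

namespace IsMacaulayDual

variable {K A ι : Type*} [Field K] [CommRing A] [Algebra K A] {V : Submodule K A}
  {φ : A →ₗ[K] K} {T : ℕ}

theorem finrank_pow_le (hφ : IsMacaulayDual φ V T) (hV : V.FG) {i j : ℕ} (hij : i + j = T) :
    finrank K (V ^ i : Submodule K A) ≤ finrank K (V ^ j : Submodule K A) := by
  have := finite_pow hV i
  have := finite_pow hV j
  let pairing : (V ^ i : Submodule K A) →ₗ[K] Dual K (V ^ j : Submodule K A) :=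
    ((LinearMap.mul K A).compr₂ φ).domRestrict₁₂ (V ^ i) (V ^ j)
  have hinj : Function.Injective pairing := (injective_iff_map_eq_zero _).2 fun u hu =>
    Subtype.ext <| hφ hij u u.2 fun v hv => LinearMap.congr_fun hu ⟨v, hv⟩
  exact (LinearMap.finrank_le_finrank_of_injective hinj).trans_eq Subspace.dual_finrank_eq

theorem finrank_pow_eq (hφ : IsMacaulayDual φ V T) (hV : V.FG) {i j : ℕ} (hij : i + j = T) :
    finrank K (V ^ i : Submodule K A) = finrank K (V ^ j : Submodule K A) :=
  (hφ.finrank_pow_le hV hij).antisymm (hφ.finrank_pow_le hV (by omega))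

theorem pow_ne_bot [Nontrivial A] (hφ : IsMacaulayDual φ V T) {t : ℕ} (ht : t ≤ T) :
    V ^ t ≠ ⊥ := by
  intro hbot
  refine one_ne_zero (hφ (zero_add T) (1 : A) (by simp) ?_)
  intro v hv
  rw [← Nat.add_sub_cancel' ht, pow_add, hbot, Submodule.bot_mul, Submodule.mem_bot] at hv
  simp [hv]

theorem eq_zero_of_mul_eq_zero (hφ : IsMacaulayDual φ V T) {x u : A} {s t : ℕ}
    (hx : x • V ^ t = V ^ (t + 1)) (hst : s + t + 1 ≤ T) (hu : u ∈ V ^ s) (hxu : x * u = 0) :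
    u = 0 := by
  obtain ⟨d, rfl⟩ := Nat.exists_eq_add_of_le hst
  refine hφ (show s + (t + d + 1) = _ by omega) u hu fun v hv => ?_
  rw [← smul_pow_eq_pow_succ_of_le hx (Nat.le_add_right t d)] at hv
  obtain ⟨w, -, rfl⟩ := hv
  change φ (u * (x * w)) = 0
  rw [mul_left_comm, ← mul_assoc, hxu, zero_mul, map_zero]

theorem eq_zero_of_pow_mul_eq_zero (hφ : IsMacaulayDual φ V T) {x u : A} {d s t : ℕ} (hxV : x ∈ V)
    (hx : x • V ^ t = V ^ (t + 1)) (hst : s + d + t ≤ T) (hu : u ∈ V ^ s) (hxu : x ^ d * u = 0) :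
    u = 0 := by
  induction d generalizing s u with
  | zero => simpa using hxu
  | succ d ih =>
    refine hφ.eq_zero_of_mul_eq_zero hx (by omega) hu
      (ih (by omega) (mul_mem_pow_succ hxV hu) ?_)
    rwa [← mul_assoc, ← pow_succ]

theorem lt_finrank_pow [CharZero K] (hφ : IsMacaulayDual φ V T) (hV : V.FG) {c t : ℕ}
    (hc : c < finrank K (V ^ c : Submodule K A)) (hct : c ≤ t) (htT : t + c ≤ T) :
    c < finrank K (V ^ t : Submodule K A) := by
  by_contra! hle
  obtain rfl | ⟨r, rfl⟩ : t = 0 ∨ ∃ r, t = r + 1 := by cases t <;> simp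
  · obtain rfl : c = 0 := by omega
    omega
  obtain ⟨x, -, hx⟩ := exists_smul_pow_eq_pow_succ hV (hle.trans hct)
  have hx' := smul_pow_eq_pow_succ_of_le hx (Nat.le_add_right r 1)
  have hmono := finrank_pow_le_of_smul_pow_eq hV hx' (show r + 1 ≤ T - c by omega)
  rw [hφ.finrank_pow_eq hV (show T - c + c = T by omega)] at hmono
  omega

theorem exists_finrank_pow_succ_le [CharZero K] [Nontrivial A] (hφ : IsMacaulayDual φ V T)
    (hV : V.FG) {a b : ℕ} (hb : 1 ≤ b) (hT : a + b ≤ T + 2)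
    (hsum : ∑ s ∈ Finset.range T, finrank K (V ^ (s + 1) : Submodule K A) <
      (a - 1) * (b / 2 + 1)) :
    ∃ r, 2 * r + 2 ≤ b ∧ finrank K (V ^ (r + 1) : Submodule K A) ≤ r + 1 := by
  -- Otherwise `dim V ^ t > b / 2` for all `b / 2 ≤ t ≤ T - b / 2`, and the sum is too big.
  by_contra! hbig
  have hmid : b / 2 < finrank K (V ^ (b / 2) : Submodule K A) := by
    obtain hc | ⟨r, hr⟩ : b / 2 = 0 ∨ ∃ r, b / 2 = r + 1 := by cases b / 2 <;> simp
    · have := finite_pow hV 0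
      rw [hc, finrank_pos_iff, Submodule.nontrivial_iff_ne_bot]
      exact hφ.pow_ne_bot T.zero_le
    · rw [hr]
      exact hbig r (by omega)
  refine hsum.not_ge ?_
  calc (a - 1) * (b / 2 + 1)
      ≤ (T - b / 2 - (b / 2 - 1)) * (b / 2 + 1) := Nat.mul_le_mul_right _ (by omega)
    _ ≤ ∑ s ∈ Finset.Ico (b / 2 - 1) (T - b / 2), finrank K (V ^ (s + 1) : Submodule K A) := by
      rw [← Nat.card_Ico, ← smul_eq_mul]
      refine Finset.card_nsmul_le_sum _ _ _ fun s hs => ?_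
      rw [Finset.mem_Ico] at hs
      exact hφ.lt_finrank_pow hV hmid (by omega) (by omega)
    _ ≤ _ := Finset.sum_le_sum_of_subset fun s hs => by
      rw [Finset.mem_Ico] at hs
      rw [Finset.mem_range]
      omega

theorem exists_forall_mul_eq_smul_mul [IsAlgClosed K] [Nontrivial A] (hφ : IsMacaulayDual φ V T)
    (hV : V.FG) {x : A} {r : ℕ} (hxV : x ∈ V) (hx : x • V ^ r = V ^ (r + 1)) (hr : 2 * r + 2 ≤ T)
    {y : ι → A} (hy : ∀ i, y i ∈ V) :
    ∃ u ∈ V ^ r, u ≠ 0 ∧ ∃ l : ι → K, ∀ i, y i * u = l i • (x * u) := by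
  have := finite_pow hV r
  have : Nontrivial (V ^ r : Submodule K A) :=
    Submodule.nontrivial_iff_ne_bot.2 (hφ.pow_ne_bot (by omega))
  let mulBy (z : A) (hz : z ∈ V) : (V ^ r : Submodule K A) →ₗ[K] (V ^ (r + 1) : Submodule K A) :=
    (LinearMap.mulLeft K z).restrict fun _ hu => mul_mem_pow_succ hz hu
  have hbij : Function.Bijective (mulBy x hxV) := by
    refine ⟨(injective_iff_map_eq_zero _).2 fun u hu => Subtype.ext ?_, fun ⟨z, hz⟩ => ?_⟩
    · exact hφ.eq_zero_of_mul_eq_zero hx (by omega) u.2 (congrArg Subtype.val hu)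
    · rw [← hx] at hz
      obtain ⟨u, hu, rfl⟩ := hz
      exact ⟨⟨u, hu⟩, rfl⟩
  let divX := LinearEquiv.ofBijective (mulBy x hxV) hbij
  let quot (i : ι) : End K (V ^ r : Submodule K A) := divX.symm ∘ₗ mulBy (y i) (hy i)
  have hquot (i u) : x * (quot i u : A) = y i * u :=
    congrArg Subtype.val (divX.apply_symm_apply (mulBy (y i) (hy i) u))
  have hcomm (i j) : Commute (quot i) (quot j) := by
    refine LinearMap.ext fun u => sub_eq_zero.1 (Subtype.ext ?_)
    refine hφ.eq_zero_of_pow_mul_eq_zero (d := 2) hxV hx (by omega) (Subtype.mem _) ?_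
    have hsq (i j) : x ^ 2 * (quot i (quot j u) : A) = y i * (y j * u) := by
      rw [sq, mul_assoc, hquot, mul_left_comm, hquot]
    simp only [End.mul_apply, Submodule.coe_sub, mul_sub, hsq]
    ring
  obtain ⟨u, hu, l, hl⟩ := exists_common_eigenvector quot hcomm
  refine ⟨u, u.2, by simpa using hu, l, fun i => ?_⟩
  rw [← hquot, hl, Submodule.coe_smul, mul_smul_comm]

theorem exists_ne_zero_forall_eval_eq_zero [IsAlgClosed K] [CharZero K]
    [Nontrivial A] [Finite ι] {y : ι → A}
    (hφ : IsMacaulayDual φ (Submodule.span K (Set.range y)) T) {a b : ℕ} (hb : 1 ≤ b)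
    (hT : a + b ≤ T + 2)
    (hsum : ∑ s ∈ Finset.range T,
      finrank K (Submodule.span K (Set.range y) ^ (s + 1) : Submodule K A) <
        (a - 1) * (b / 2 + 1)) :
    ∃ l : ι → K, l ≠ 0 ∧ ∀ d ≤ a, ∀ F : MvPolynomial ι K, F.IsHomogeneous d → aeval y F = 0 →
      eval l F = 0 := by
  set V := Submodule.span K (Set.range y) with hVy
  have hV : V.FG := Submodule.fg_span (Set.finite_range y)
  have ha : 1 < a := by
    by_contra! ha
    simp [Nat.sub_eq_zero_of_le ha] at hsum
  obtain ⟨r, hrb, hr⟩ := hφ.exists_finrank_pow_succ_le hV hb hT hsum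
  obtain ⟨x, hxV, hx⟩ := exists_smul_pow_eq_pow_succ hV hr
  obtain ⟨u, hu, hu0, l, hl⟩ := hφ.exists_forall_mul_eq_smul_mul hV hxV hx (by omega)
    (fun i => Submodule.subset_span (Set.mem_range_self i))
  refine ⟨l, ?_, fun d hd F hF hyF => ?_⟩
  · rintro rfl
    have hle : V ≤ LinearMap.ker (LinearMap.mulRight K u) := by
      rw [hVy, Submodule.span_le]
      rintro _ ⟨i, rfl⟩
      simpa using hl i
    exact hu0 (hφ.eq_zero_of_mul_eq_zero hx (by omega) hu (hle hxV))
  · have hzero := aeval_mul_eq_eval_smul hl hF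
    rw [hyF, zero_mul, eq_comm, smul_eq_zero] at hzero
    exact hzero.resolve_right fun hxu =>
      hu0 (hφ.eq_zero_of_pow_mul_eq_zero hxV hx (by omega) hu hxu)

end IsMacaulayDual

section Apolarity

variable {K R : Type*} [Field K] [CommRing R] [Algebra K R]

/-- The apolar ideal of a functional `φ`: the largest ideal on which `φ` vanishes. -/
def apolarIdeal (φ : R →ₗ[K] K) : Ideal R where
  carrier := {f | ∀ g, φ (f * g) = 0}
  add_mem' hf hf' g := by rw [add_mul, map_add, hf, hf', add_zero]
  zero_mem' g := by rw [zero_mul, map_zero]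
  smul_mem' c f hf g := by rw [smul_eq_mul, mul_comm c, mul_assoc, hf]

/-- The functional induced by `φ` on the quotient by its apolar ideal. -/
def apolarFunctional (φ : R →ₗ[K] K) : R ⧸ apolarIdeal φ →ₗ[K] K :=
  ((apolarIdeal φ).restrictScalars K).liftQ φ fun f hf => by simpa using hf 1

theorem apolarFunctional_mk (φ : R →ₗ[K] K) (f : R) :
    apolarFunctional φ (Ideal.Quotient.mk _ f) = φ f :=
  rfl

end Apolarity

section ImagesOfForms

variable {K ι B : Type*} [Field K] [CommRing B] [Algebra K B]

/-- The image under `f` of the forms of degree `t`. When `f` is the restriction of functions to a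
finite subscheme of affine space, its dimension is the value at `t` of the Hilbert function. -/
def formImage (f : MvPolynomial ι K →ₐ[K] B) (t : ℕ) : Submodule K B :=
  (homogeneousSubmodule ι K t).map f.toLinearMap

theorem mem_formImage {f : MvPolynomial ι K →ₐ[K] B} {t : ℕ} {u : B} :
    u ∈ formImage f t ↔ ∃ F : MvPolynomial ι K, F.IsHomogeneous t ∧ f F = u :=
  Iff.rfl

theorem span_range_X_pow (f : MvPolynomial ι K →ₐ[K] B) (t : ℕ) :
    Submodule.span K (Set.range fun i => f (X i)) ^ t = formImage f t := by
  rw [formImage, ← homogeneousSubmodule_one_pow, Submodule.map_pow,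
    homogeneousSubmodule_one_eq_span_X, Submodule.map_span, ← Set.range_comp]
  rfl

theorem monotone_formImage {f : MvPolynomial ι K →ₐ[K] B} {L : MvPolynomial ι K}
    (hL : L.IsHomogeneous 1) (hfL : f L = 1) : Monotone (formImage f) := by
  refine monotone_nat_of_le_succ fun t => ?_
  rintro _ ⟨F, hF, rfl⟩
  exact mem_formImage.2 ⟨F * L, hF.mul hL, by simp [hfL]⟩

end ImagesOfForms

section GradedApolarity

variable {K ι : Type*} [Field K] {ψ : MvPolynomial ι K →ₗ[K] K} {T : ℕ}

theorem mem_apolarIdeal_comp_homogeneousComponent {F : MvPolynomial ι K} {i : ℕ}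
    (hF : F.IsHomogeneous i) :
    F ∈ apolarIdeal (ψ ∘ₗ homogeneousComponent T) ↔
      ∀ j, i + j = T → ∀ G : MvPolynomial ι K, G.IsHomogeneous j → ψ (F * G) = 0 := by
  constructor
  · rintro h j rfl G hG
    simpa [homogeneousComponent_eq_self (hF.mul hG)] using h G
  · intro h G
    rw [← sum_homogeneousComponent G, Finset.mul_sum, map_sum]
    refine Finset.sum_eq_zero fun j _ => ?_
    have hG := homogeneousComponent_isHomogeneous j G
    rw [LinearMap.comp_apply,
      homogeneousComponent_of_mem ((mem_homogeneousSubmodule _ _).2 (hF.mul hG))]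
    split_ifs with hT
    · exact h j hT.symm _ hG
    · exact map_zero ψ

variable (ψ T) in
theorem isMacaulayDual_apolarFunctional :
    IsMacaulayDual (apolarFunctional (ψ ∘ₗ homogeneousComponent T))
      (Submodule.span K (Set.range fun i : ι => Ideal.Quotient.mkₐ K _ (X i))) T := by
  intro i j hij u hu huv
  rw [span_range_X_pow] at hu
  obtain ⟨F, hF, rfl⟩ := mem_formImage.1 hu
  refine Ideal.Quotient.eq_zero_iff_mem.2
    ((mem_apolarIdeal_comp_homogeneousComponent hF).2 fun j' hj' G hG => ?_)
  obtain rfl : j = j' := by omega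
  have hFG := huv (Ideal.Quotient.mkₐ K _ G)
    (by rw [span_range_X_pow]; exact mem_formImage.2 ⟨G, hG, rfl⟩)
  rw [← map_mul, Ideal.Quotient.mkₐ_eq_mk, apolarFunctional_mk, LinearMap.comp_apply,
    homogeneousComponent_eq_self (hij ▸ hF.mul hG)] at hFG
  exact hFG

theorem exists_ne_zero_forall_mem_apolarIdeal_eval_eq_zero [IsAlgClosed K] [CharZero K] [Finite ι]
    {G : MvPolynomial ι K} (hG : G.IsHomogeneous T) (hψG : ψ G ≠ 0) {a b : ℕ} (hb : 1 ≤ b)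
    (hT : a + b ≤ T + 2)
    (hsum : ∑ s ∈ Finset.range T, finrank K
      (formImage (Ideal.Quotient.mkₐ K (apolarIdeal (ψ ∘ₗ homogeneousComponent T))) (s + 1)) <
        (a - 1) * (b / 2 + 1)) :
    ∃ l : ι → K, l ≠ 0 ∧ ∀ d ≤ a, ∀ F : MvPolynomial ι K, F.IsHomogeneous d →
      F ∈ apolarIdeal (ψ ∘ₗ homogeneousComponent T) → eval l F = 0 := by
  have : Nontrivial (MvPolynomial ι K ⧸ apolarIdeal (ψ ∘ₗ homogeneousComponent T)) := by
    rw [Ideal.Quotient.nontrivial_iff, Ideal.ne_top_iff_one,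
      mem_apolarIdeal_comp_homogeneousComponent (isHomogeneous_one ι K)]
    exact fun h => hψG (by simpa using h T (zero_add T) G hG)
  obtain ⟨l, hl0, hl⟩ := (isMacaulayDual_apolarFunctional ψ T).exists_ne_zero_forall_eval_eq_zero
    hb hT ((Finset.sum_congr rfl fun s _ => by rw [span_range_X_pow]).trans_lt hsum)
  refine ⟨l, hl0, fun d hd F hF hmem => hl d hd F hF ?_⟩
  rw [← comp_aeval_apply, aeval_X_left_apply]
  exact Ideal.Quotient.eq_zero_iff_mem.2 hmem

end GradedApolarity

section HilbertFunction

variable {K ι B : Type*} [Field K] [CommRing B] [Algebra K B] [FiniteDimensional K B]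
  {ev : MvPolynomial ι K →ₐ[K] B} {L : MvPolynomial ι K} {w : B →ₗ[K] K} {T : ℕ}

theorem finrank_formImage_mkₐ_add_le (hL : L.IsHomogeneous 1) (hevL : ev L = 1)
    (hw : ∀ t < T, formImage ev t ≤ LinearMap.ker w) (t : ℕ) :
    finrank K (formImage (Ideal.Quotient.mkₐ K
        (apolarIdeal ((w ∘ₗ ev.toLinearMap) ∘ₗ homogeneousComponent T))) (t + 1)) +
      finrank K (formImage ev t) ≤ finrank K (formImage ev (t + 1)) := by
  have hle := finrank_range_add_finrank_le
    (ev.toLinearMap.domRestrict (homogeneousSubmodule ι K (t + 1)))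
    ((Ideal.Quotient.mkₐ K (apolarIdeal ((w ∘ₗ ev.toLinearMap) ∘ₗ
      homogeneousComponent T))).toLinearMap.domRestrict (homogeneousSubmodule ι K (t + 1)))
    (formImage ev t)
    ((monotone_formImage hL hevL t.le_succ).trans_eq (LinearMap.range_domRestrict _ _).symm)
    fun ⟨F, hF⟩ hmem => ?_
  · rwa [LinearMap.range_domRestrict, LinearMap.range_domRestrict] at hle
  · obtain ⟨F', hF', hev⟩ := mem_formImage.1 hmem
    refine Ideal.Quotient.eq_zero_iff_mem.2
      ((mem_apolarIdeal_comp_homogeneousComponent hF).2 fun j hj G hG => ?_)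
    have hval : ev (F * G) = ev (F' * G) := by
      rw [map_mul, map_mul, hev]
      rfl
    rw [LinearMap.comp_apply, AlgHom.toLinearMap_apply, hval]
    exact hw (t + j) (by omega) (mem_formImage.2 ⟨_, hF'.mul hG, rfl⟩)

theorem sum_finrank_formImage_mkₐ_le (hL : L.IsHomogeneous 1) (hevL : ev L = 1)
    (hw : ∀ t < T, formImage ev t ≤ LinearMap.ker w) (t : ℕ) :
    ∑ s ∈ Finset.range t, finrank K (formImage (Ideal.Quotient.mkₐ K
        (apolarIdeal ((w ∘ₗ ev.toLinearMap) ∘ₗ homogeneousComponent T))) (s + 1)) ≤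
      finrank K (formImage ev t) := by
  induction t with
  | zero => simp
  | succ t ih =>
    rw [Finset.sum_range_succ, add_comm]
    exact (Nat.add_le_add_left ih _).trans (finrank_formImage_mkₐ_add_le hL hevL hw t)

theorem exists_zero_of_notMem_formImage [IsAlgClosed K] [CharZero K] [Finite ι]
    (hL : L.IsHomogeneous 1) (hevL : ev L = 1) {a b D t : ℕ} (hb : 1 ≤ b) (hD : a + b ≤ D + 3)
    (hcard : finrank K B < (a - 1) * (b / 2 + 1)) {e : B} (he : e ∉ formImage ev D)
    (het : e ∈ formImage ev t) :
    ∃ l : ι → K, l ≠ 0 ∧ eval l L = 0 ∧ ∀ d ≤ a, ∀ F : MvPolynomial ι K, F.IsHomogeneous d →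
      ev F = 0 → eval l F = 0 := by
  classical
  obtain ⟨w, hwe, hwD⟩ := Submodule.exists_le_ker_of_notMem he
  have hex : ∃ T, ¬ formImage ev T ≤ LinearMap.ker w := ⟨t, fun h => hwe (h het)⟩
  obtain ⟨T, hT, hmin⟩ : ∃ T, ¬ formImage ev T ≤ LinearMap.ker w ∧
      ∀ t < T, formImage ev t ≤ LinearMap.ker w :=
    ⟨Nat.find hex, Nat.find_spec hex, fun t ht => not_not.1 (Nat.find_min hex ht)⟩
  have hDT : D < T := by
    by_contra! hTD
    exact hT ((monotone_formImage hL hevL hTD).trans hwD)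
  obtain ⟨_, ⟨G, hG, rfl⟩, hwG⟩ := SetLike.not_le_iff_exists.1 hT
  have ha : 1 < a := by
    by_contra! ha
    simp [Nat.sub_eq_zero_of_le ha] at hcard
  obtain ⟨l, hl0, hl⟩ := exists_ne_zero_forall_mem_apolarIdeal_eval_eq_zero
    (ψ := w ∘ₗ ev.toLinearMap) hG hwG hb (show a + b ≤ T + 2 by omega)
    ((sum_finrank_formImage_mkₐ_le hL hevL hmin T).trans (Submodule.finrank_le _) |>.trans_lt hcard)
  refine ⟨l, hl0, hl 1 ha.le L hL ?_, fun d hd F hF hevF => hl d hd F hF ?_⟩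
  · refine (mem_apolarIdeal_comp_homogeneousComponent hL).2 fun j hj G hG => ?_
    have hmem : ev G ∈ formImage ev j := mem_formImage.2 ⟨G, hG, rfl⟩
    simpa [hevL] using hmin j (by omega) hmem
  · exact (mem_apolarIdeal_comp_homogeneousComponent hF).2 fun j _ G _ => by simp [hevF]

end HilbertFunction

section Points

variable {K ι S : Type*} [Field K] {v : S → ι → K}

/-- Restriction of polynomial functions to the family of points `v`. -/
def evalAt (v : S → ι → K) : MvPolynomial ι K →ₐ[K] (S → K) :=
  AlgHom.pi fun p => aeval (v p)

theorem evalAt_apply (v : S → ι → K) (F : MvPolynomial ι K) (p : S) :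
    evalAt v F p = eval (v p) F :=
  rfl

theorem single_mem_formImage_evalAt_iff [DecidableEq S] {P : S} {t : ℕ} :
    Pi.single P 1 ∈ formImage (evalAt v) t ↔
      ∃ F : MvPolynomial ι K, F.IsHomogeneous t ∧ (∀ q, q ≠ P → eval (v q) F = 0) ∧
        eval (v P) F ≠ 0 := by
  constructor
  · rintro ⟨F, hF, hev⟩
    have heval (q) : eval (v q) F = (Pi.single P 1 : S → K) q := congrFun hev q
    exact ⟨F, hF, fun q hq => by simp [heval, hq], by simp [heval]⟩
  · rintro ⟨F, hF, hq, hP⟩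
    refine mem_formImage.2 ⟨(eval (v P) F)⁻¹ • F,
      Submodule.smul_mem (homogeneousSubmodule ι K t) _ hF, funext fun q => ?_⟩
    rcases eq_or_ne q P with rfl | hqP
    · simp [evalAt_apply, hP]
    · simp [evalAt_apply, hq q hqP, hqP]

theorem exists_single_mem_formImage_evalAt [Finite S] [DecidableEq S] (hv : Function.Injective v)
    {L : MvPolynomial ι K} (hL : L.IsHomogeneous 1) (hvL : ∀ p, eval (v p) L = 1) (P : S) :
    ∃ t, Pi.single P 1 ∈ formImage (evalAt v) t := by
  cases nonempty_fintype S
  have hsep (q : S) : ∃ H : MvPolynomial ι K, H.IsHomogeneous 1 ∧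
      (q ≠ P → eval (v q) H = 0 ∧ eval (v P) H ≠ 0) := by
    by_cases hq : q = P
    · exact ⟨L, hL, fun h => absurd hq h⟩
    · obtain ⟨j, hj⟩ := Function.ne_iff.1 (hv.ne hq)
      exact ⟨X j - C (v q j) * L, (isHomogeneous_X K j).sub (hL.C_mul _), fun _ =>
        ⟨by simp [hvL], by simpa [hvL, sub_eq_zero] using hj.symm⟩⟩
  choose H hH hHv using hsep
  refine ⟨_, single_mem_formImage_evalAt_iff.2 ⟨∏ q ∈ Finset.univ.erase P, H q,
    IsHomogeneous.prod _ _ _ fun q _ => hH q, fun q hq => ?_, ?_⟩⟩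
  · rw [map_prod]
    exact Finset.prod_eq_zero (by simpa using hq) (hHv q hq).1
  · rw [map_prod, Finset.prod_ne_zero_iff]
    exact fun q hq => (hHv q (Finset.ne_of_mem_erase hq)).2

theorem exists_zero_of_not_exists_separating [IsAlgClosed K] [CharZero K] [Finite ι] [Finite S]
    (hv : Function.Injective v) {L : MvPolynomial ι K} (hL : L.IsHomogeneous 1)
    (hvL : ∀ p, eval (v p) L = 1) {a b D : ℕ} (hb : 1 ≤ b) (hD : a + b ≤ D + 3)
    (hcard : Nat.card S < (a - 1) * (b / 2 + 1)) {P : S}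
    (hP : ¬ ∃ F : MvPolynomial ι K, F.IsHomogeneous D ∧ (∀ q, q ≠ P → eval (v q) F = 0) ∧
      eval (v P) F ≠ 0) :
    ∃ l : ι → K, l ≠ 0 ∧ eval l L = 0 ∧ ∀ d ≤ a, ∀ F : MvPolynomial ι K, F.IsHomogeneous d →
      (∀ p, eval (v p) F = 0) → eval l F = 0 := by
  classical
  cases nonempty_fintype S
  rw [← single_mem_formImage_evalAt_iff] at hP
  obtain ⟨t, ht⟩ := exists_single_mem_formImage_evalAt hv hL hvL P
  rw [Nat.card_eq_fintype_card, ← finrank_fintype_fun_eq_card K] at hcard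
  obtain ⟨l, hl0, hlL, hl⟩ :=
    exists_zero_of_notMem_formImage hL (funext hvL) hb hD hcard hP ht
  exact ⟨l, hl0, hlL, fun d hd F hF hvF => hl d hd F hF (funext hvF)⟩

end Points

section ProjectivePoints

variable {K ι : Type*} [Field K] {F : MvPolynomial ι K} {d : ℕ}

theorem eval_smul_eq_zero_iff (hF : F.IsHomogeneous d) {c : K} (hc : c ≠ 0) {v : ι → K} :
    eval (c • v) F = 0 ↔ eval v F = 0 := by
  rw [eval_smul hF, mul_eq_zero, or_iff_right (pow_ne_zero d hc)]

theorem eval_rep_mk_eq_zero_iff (hF : F.IsHomogeneous d) {v : ι → K} (hv : v ≠ 0) :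
    eval (Projectivization.mk K v hv).rep F = 0 ↔ eval v F = 0 := by
  obtain ⟨c, hc⟩ := Projectivization.exists_smul_eq_mk_rep K v hv
  rw [← hc]
  exact eval_smul_eq_zero_iff hF c.ne_zero

theorem exists_linearForm_forall_eval_ne_zero [Infinite K] [Finite ι] {S : Type*} [Finite S]
    {v : S → ι → K} (hv : ∀ p, v p ≠ 0) :
    ∃ L : MvPolynomial ι K, L.IsHomogeneous 1 ∧ ∀ p, eval (v p) L ≠ 0 := by
  classical
  cases nonempty_fintype ι
  obtain ⟨ψ, hψ⟩ := exists_dual_forall_apply_ne_zero (K := K) v hv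
  refine ⟨∑ i, C (ψ (Pi.single i 1)) * X i,
    IsHomogeneous.sum _ _ _ fun i _ => isHomogeneous_C_mul_X _ _, fun p => ?_⟩
  convert hψ p
  conv_rhs => rw [pi_eq_sum_univ' (v p), map_sum]
  simp [mul_comm]

theorem eq_of_smul_rep_eq_smul_rep {p q : ℙ K (ι → K)} {c c' : K} (hc : c ≠ 0)
    (h : c • p.rep = c' • q.rep) : p = q := by
  rw [← p.mk_rep, ← q.mk_rep, Projectivization.mk_eq_mk_iff']
  exact ⟨c⁻¹ * c', by rw [mul_smul, ← h, inv_smul_smul₀ hc]⟩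

theorem exists_separating_form_of_ncard_lt [IsAlgClosed K] [CharZero K] [Finite ι]
    {Γ : Set (ℙ K (ι → K))} (hΓ : Γ.Finite) {a b D : ℕ}
    (hcut : ∀ p : ℙ K (ι → K), (∀ d ≤ a, ∀ F : MvPolynomial ι K, F.IsHomogeneous d →
      (∀ q ∈ Γ, eval q.rep F = 0) → eval p.rep F = 0) → p ∈ Γ)
    (hb : 1 ≤ b) (hD : a + b ≤ D + 3) (hcard : Γ.ncard < (a - 1) * (b / 2 + 1))
    {P : ℙ K (ι → K)} (hP : P ∈ Γ) :
    ∃ F : MvPolynomial ι K, F.IsHomogeneous D ∧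
      (∀ Q ∈ Γ, Q ≠ P → eval Q.rep F = 0) ∧ eval P.rep F ≠ 0 := by
  have : Finite Γ := hΓ
  obtain ⟨L, hL, hLΓ⟩ := exists_linearForm_forall_eval_ne_zero fun p : Γ => p.1.rep_nonzero
  let v (p : Γ) : ι → K := (eval p.1.rep L)⁻¹ • p.1.rep
  have hv {d : ℕ} {F : MvPolynomial ι K} (hF : F.IsHomogeneous d) (p : Γ) :
      eval (v p) F = 0 ↔ eval p.1.rep F = 0 := eval_smul_eq_zero_iff hF (inv_ne_zero (hLΓ p))
  have hvL (p) : eval (v p) L = 1 := by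
    rw [eval_smul hL, pow_one, inv_mul_cancel₀ (hLΓ p)]
  have hvinj : Function.Injective v := fun p q hpq =>
    Subtype.ext (eq_of_smul_rep_eq_smul_rep (inv_ne_zero (hLΓ p)) hpq)
  by_contra hno
  obtain ⟨l, hl0, hlL, hl⟩ := exists_zero_of_not_exists_separating (P := ⟨P, hP⟩) hvinj hL hvL hb hD
    hcard fun ⟨F, hF, hFQ, hFP⟩ => hno ⟨F, hF,
      fun Q hQ hQP => (hv hF ⟨Q, hQ⟩).1 (hFQ _ (by simpa using hQP)),
      fun h => hFP ((hv hF ⟨P, hP⟩).2 h)⟩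
  refine hLΓ ⟨Projectivization.mk K l hl0, hcut _ fun d hd F hF hFΓ => ?_⟩
    ((eval_rep_mk_eq_zero_iff hL hl0).2 hlL)
  rw [eval_rep_mk_eq_zero_iff hF]
  exact hl d hd F hF fun p => (hv hF p).2 (hFΓ p p.2)

end ProjectivePoints

section JacobianMinors

variable {K ι : Type*} [Field K] {f g : MvPolynomial ι K} {n k : ℕ}

theorem rank_le_one_iff_forall_minor_eq_zero [Fintype ι] {M : Matrix (Fin 2) ι K} :
    M.rank ≤ 1 ↔ ∀ i j, M 0 i * M 1 j - M 0 j * M 1 i = 0 := by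
  constructor
  · intro hrank i j
    by_contra hminor
    have hrows : LinearIndependent K M.row := by
      refine Fintype.linearIndependent_iff.2 fun c hc => ?_
      have hi := congrFun hc i
      have hj := congrFun hc j
      simp only [Fin.sum_univ_two, Matrix.row, Pi.add_apply, Pi.smul_apply, smul_eq_mul,
        Pi.zero_apply] at hi hj
      refine Fin.forall_fin_two.2 ⟨?_, ?_⟩ <;> refine (mul_eq_zero.1 ?_).resolve_right hminor
      · linear_combination M 1 j * hi - M 1 i * hj
      · linear_combination M 0 i * hj - M 0 j * hi
    simp [hrows.rank_matrix] at hrank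
  · intro hminor
    obtain ⟨u, w, rfl⟩ : ∃ u w, M = Matrix.vecMulVec u w := by
      by_cases h0 : ∀ i, M 0 i = 0
      · refine ⟨![0, 1], M 1, Matrix.ext fun q j => ?_⟩
        fin_cases q <;> simp [Matrix.vecMulVec, h0]
      · obtain ⟨i, hi⟩ := not_forall.1 h0
        refine ⟨![1, M 1 i / M 0 i], M 0, Matrix.ext fun q j => ?_⟩
        fin_cases q
        · simp [Matrix.vecMulVec]
        · change M 1 j = M 1 i / M 0 i * M 0 j
          rw [div_mul_eq_mul_div, eq_div_iff hi]
          linear_combination hminor i j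
    exact Matrix.rank_vecMulVec_le u w

/-- The `2 × 2` minor of the Jacobian matrix of `f, g` on the columns `i, j`. -/
def jacobianMinor (f g : MvPolynomial ι K) (i j : ι) : MvPolynomial ι K :=
  pderiv i f * pderiv j g - pderiv j f * pderiv i g

theorem isHomogeneous_jacobianMinor (hf : f.IsHomogeneous n) (hg : g.IsHomogeneous k)
    (hn : 1 ≤ n) (hk : 1 ≤ k) (i j : ι) : (jacobianMinor f g i j).IsHomogeneous (n + k - 2) := by
  rw [show n + k - 2 = (n - 1) + (k - 1) by omega]
  exact (hf.pderiv.mul hg.pderiv).sub (hf.pderiv.mul hg.pderiv)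

/-- The set of points of the projective scheme `{f = g = 0}` at which the Jacobian matrix of `f, g`
has rank at most `1`. -/
def singularLocus [Fintype ι] (f g : MvPolynomial ι K) : Set (ℙ K (ι → K)) :=
  {p | eval p.rep f = 0 ∧ eval p.rep g = 0 ∧
    (Matrix.of ![fun j => eval p.rep (pderiv j f), fun j => eval p.rep (pderiv j g)]).rank ≤ 1}

theorem mem_singularLocus_iff [Fintype ι] {p : ℙ K (ι → K)} :
    p ∈ singularLocus f g ↔ eval p.rep f = 0 ∧ eval p.rep g = 0 ∧
      ∀ i j, eval p.rep (jacobianMinor f g i j) = 0 := by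
  simp [singularLocus, rank_le_one_iff_forall_minor_eq_zero, jacobianMinor]

theorem mem_singularLocus_of_forall_form [Fintype ι] (hf : f.IsHomogeneous n)
    (hg : g.IsHomogeneous k) (hn : 2 ≤ n) (hk : 2 ≤ k) {p : ℙ K (ι → K)}
    (hp : ∀ d ≤ n + k - 2, ∀ F : MvPolynomial ι K, F.IsHomogeneous d →
      (∀ q ∈ singularLocus f g, eval q.rep F = 0) → eval p.rep F = 0) :
    p ∈ singularLocus f g :=
  mem_singularLocus_iff.2
    ⟨hp n (by omega) f hf fun _ hq => hq.1, hp k (by omega) g hg fun _ hq => hq.2.1, fun i j =>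
      hp _ le_rfl _ (isHomogeneous_jacobianMinor hf hg (by omega) (by omega) i j) fun _ hq =>
        (mem_singularLocus_iff.1 hq).2.2 i j⟩

end JacobianMinors

theorem stmt_6_general {K ι : Type*} [Field K] [IsAlgClosed K] [CharZero K] [Fintype ι]
    {n k : ℕ} {f g : MvPolynomial ι K} (hf : f.IsHomogeneous n) (hg : g.IsHomogeneous k)
    (hn : 2 ≤ n) (hk : 2 ≤ k) (hfin : (singularLocus f g).Finite)
    (hcard : (singularLocus f g).ncard < (n + k - 3) * ((n + 1) / 2)) :
    ∀ P ∈ singularLocus f g, ∃ F : MvPolynomial ι K,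
      F.IsHomogeneous (2 * n + k - 6) ∧
      (∀ Q ∈ singularLocus f g, Q ≠ P → eval Q.rep F = 0) ∧ eval P.rep F ≠ 0 := by
  intro P hP
  refine exists_separating_form_of_ncard_lt (a := n + k - 2) (b := n - 1) hfin
    (fun p => mem_singularLocus_of_forall_form hf hg hn hk) (by omega) (by omega) ?_ hP
  rwa [show n + k - 2 - 1 = n + k - 3 by omega, show (n - 1) / 2 + 1 = (n + 1) / 2 by omega]

theorem lt_mul_half_of_five_mul_le {n k N : ℕ} (hn : 1 ≤ n) (hnk : 4 ≤ n + k)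
    (h : 5 * N ≤ (n + k - 2) * (n - 1)) : N < (n + k - 3) * ((n + 1) / 2) := by
  obtain ⟨c, hc⟩ := Nat.exists_eq_add_of_le hnk
  rw [show n + k - 2 = c + 2 by omega] at h
  rw [show n + k - 3 = c + 1 by omega]
  have hhalf : n ≤ 2 * ((n + 1) / 2) := by omega
  obtain ⟨m, rfl⟩ := Nat.exists_eq_add_of_le' hn
  rw [Nat.add_sub_cancel] at h
  nlinarith

theorem stmt_6 (n k : ℕ) (f g : MvPolynomial (Fin 6) ℂ)
    (hf : f.IsHomogeneous n) (hg : g.IsHomogeneous k)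
    (hk : 2 ≤ k) (hkn : k ≤ n) (hn : 5 ≤ n)
    (hGsmooth : ∀ p : ProjPt 5, eval p.rep g = 0 → ∃ j : Fin 6, eval p.rep (pderiv j g) ≠ 0)
    (hfin : (SingCI6 f g).Finite)
    (hcard : 5 * (SingCI6 f g).ncard ≤ (n + k - 2) * (n - 1)) :
    ∀ P ∈ SingCI6 f g, ∃ F : MvPolynomial (Fin 6) ℂ,
      F.IsHomogeneous (2 * n + k - 6) ∧
      (∀ Q ∈ SingCI6 f g, Q ≠ P → VanishesAt F Q) ∧ ¬ VanishesAt F P :=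
  stmt_6_general hf hg (by omega) hk hfin (lt_mul_half_of_five_mul_le (by omega) (by omega) hcard)
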